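/- arXiv:1810.09005 — 8 statements merged into one kernel-verified Lean document; each statement's English description precedes it below -/
import Mathlib

section
/- There exists an optimal schedule B1 in which no two distinct mini-batches share the same leftmost file. -/
/-! There are finitely many schedules, so one can be chosen that is optimal and, among optimal
schedules, has the fewest mini-batches. If it contained `(a, c)` and `(a, d)` with `c < d`, then
`(a, c)` could be deleted: `(a, d)` runs first and covers all files of `(a, c)`, and deleting a
detour only makes later traversals start earlier. No response time increases (`resp_erase_le`), so
the smaller schedule is still optimal, contradicting minimality. -/

open Finset

namespace LTSP

variable (N : ℕ) (s : Fin N → ℕ) (n : Fin N → ℕ)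

/-- Left edge (0-based coordinate) of file `f`: file `f` occupies the blocks
`leftPos f + 1, …, leftPos f + s f` of the tape. -/
def leftPos (f : Fin N) : ℕ := ∑ j ∈ Finset.Iio f, s j

/-- Leftmost block of file `f`: `l(f) = 1 + ∑_{j<f} s j`. -/
def lB (f : Fin N) : ℕ := 1 + leftPos N s f

/-- Tape length `m = ∑ s f`. -/
def tapeLen : ℕ := ∑ j, s j

/-- Left edge `l(b)` (0-based coordinate) of a mini-batch `b = (b.1, b.2)`. -/
def Lb (b : Fin N × Fin N) : ℕ := leftPos N s b.1

/-- Right edge of a mini-batch; numerically this equals its rightmost block `r(b)`. -/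
def Rb (b : Fin N × Fin N) : ℕ := leftPos N s b.2 + s b.2

/-- Size of a mini-batch: `s(b) = r(b) - l(b) + 1`. -/
def sb (b : Fin N × Fin N) : ℕ := Rb N s b - Lb N s b

/-- `f ∈ F(b)` : file `f` is contained in the mini-batch `b`. -/
def Covers (b : Fin N × Fin N) (f : Fin N) : Prop := b.1 ≤ f ∧ f ≤ b.2

/-- `f ∈ F(B)` : file `f` is traversed by some mini-batch of the schedule `B`. -/
def InF (B : Finset (Fin N × Fin N)) (f : Fin N) : Prop := ∃ b ∈ B, Covers N b f

/-- A schedule is a finite set of mini-batches, i.e. pairs `(f, f')` with `f ≤ f'`. -/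
def Valid (B : Finset (Fin N × Fin N)) : Prop := ∀ b ∈ B, b.1 ≤ b.2

/-- `b'` is executed strictly before `b`: mini-batches are executed in decreasing order
of their leftmost blocks, ties broken by executing larger mini-batches first. -/
def ExecBefore (b' b : Fin N × Fin N) : Prop :=
  Lb N s b < Lb N s b' ∨ (Lb N s b' = Lb N s b ∧ Rb N s b < Rb N s b')

open scoped Classical in
/-- Time step at which the read movement of mini-batch `b ∈ B` begins: the head starts at
position `m` at time `0`, moves left one block per time step, and detours `2 s(b')` time
steps for every mini-batch `b'` executed before `b`. -/
noncomputable def startTime (B : Finset (Fin N × Fin N)) (b : Fin N × Fin N) : ℕ :=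
  (tapeLen N s - Lb N s b) + 2 * ∑ b' ∈ B.filter (fun b' => ExecBefore N s b' b), sb N s b'

/-- Time step at which the left-to-right traversal of file `f` within the read movement
of mini-batch `b` begins. -/
noncomputable def travTime (B : Finset (Fin N × Fin N)) (f : Fin N) (b : Fin N × Fin N) : ℕ :=
  startTime N s B b + (leftPos N s f - Lb N s b)

/-- Time step at which Phase 2 begins (the head has descended the whole tape, detouring
`2 s(b)` time steps for each executed mini-batch). -/
noncomputable def phase2Start (B : Finset (Fin N × Fin N)) : ℕ :=
  tapeLen N s + 2 * ∑ b ∈ B, sb N s b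

open scoped Classical in
/-- Response time of the requests of file `f` under schedule `B`: the time step at which the
first complete left-to-right traversal of `f` begins (within the first mini-batch of `B`
containing `f` if one exists, and during Phase 2 otherwise). -/
noncomputable def resp (B : Finset (Fin N × Fin N)) (f : Fin N) : ℕ :=
  if h : (B.filter (fun b => Covers N b f)).Nonempty then
    (B.filter (fun b => Covers N b f)).inf' h (travTime N s B f)
  else phase2Start N s B + leftPos N s f

/-- Objective value of a schedule: the sum of the response times of all requests
(file `f` contributes `n f` times its response time). -/
noncomputable def v (B : Finset (Fin N × Fin N)) : ℕ :=
  ∑ f, n f * resp N s B f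

/-- A schedule is optimal if its objective value is minimum among all schedules. -/
def Optimal (B : Finset (Fin N × Fin N)) : Prop :=
  Valid N B ∧ ∀ B' : Finset (Fin N × Fin N), Valid N B' → v N s n B ≤ v N s n B'

open scoped Classical in
/-- Left-hand side of Inequalities (1)/(2): `n(f)·(l(f) + ∑_{b ∈ B, r(b) < l(f)} s(b))`. -/
noncomputable def ineqLHS (B : Finset (Fin N × Fin N)) (f : Fin N) : ℕ :=
  n f * (lB N s f + ∑ b ∈ B.filter (fun b => Rb N s b < lB N s f), sb N s b)

open scoped Classical in
/-- Right-hand side of Inequalities (1)/(2):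
`s(f)·(∑_{f', l(f') < l(f)} n(f') + ∑_{f' ∉ F(B), l(f') > l(f)} n(f'))`. -/
noncomputable def ineqRHS (B : Finset (Fin N × Fin N)) (f : Fin N) : ℕ :=
  s f * ((∑ f' ∈ Finset.univ.filter (fun f' => lB N s f' < lB N s f), n f') +
    ∑ f' ∈ Finset.univ.filter (fun f' => ¬ InF N B f' ∧ lB N s f < lB N s f'), n f')

/-- Inequality (1). -/
def Ineq1 (B : Finset (Fin N × Fin N)) (f : Fin N) : Prop :=
  ineqRHS N s n B f < ineqLHS N s n B f

/-- Inequality (2). -/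
def Ineq2 (B : Finset (Fin N × Fin N)) (f : Fin N) : Prop :=
  ineqLHS N s n B f < ineqRHS N s n B f

/-- The Greedy Strategy schedule: one atomic mini-batch `(f, f)` for every file with at
least one request, except the leftmost file of the tape. -/
def GS (hN : 0 < N) : Finset (Fin N × Fin N) :=
  (Finset.univ.filter (fun f : Fin N => 0 < n f ∧ f ≠ ⟨0, hN⟩)).image (fun f => (f, f))

/-- Positions do not decrease along the tape, so among mini-batches with a common leftmost file
the one with the larger last file reaches at least as far to the right. -/
theorem rB_mono {c d : Fin N} (h : c ≤ d) :
    leftPos N s c + s c ≤ leftPos N s d + s d := by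
  have key : ∀ f : Fin N, leftPos N s f + s f = ∑ j ∈ Finset.Iic f, s j := fun f => by
    rw [leftPos, ← Finset.Iio_insert, Finset.sum_insert (by simp), add_comm]
  rw [key, key]
  exact Finset.sum_le_sum_of_subset (Finset.Iic_subset_Iic.2 h)

theorem startTime_erase_le (B : Finset (Fin N × Fin N)) (x b : Fin N × Fin N) :
    startTime N s (B.erase x) b ≤ startTime N s B b := by
  classical
  unfold startTime
  gcongr
  exact Finset.erase_subset _ _

/-- Everything executed before the longer mini-batch `(a, d)` is also executed before `(a, c)`. -/
theorem startTime_le_of_le (B : Finset (Fin N × Fin N)) {a c d : Fin N} (h : c ≤ d) :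
    startTime N s B (a, d) ≤ startTime N s B (a, c) := by
  classical
  have hR := rB_mono N s h
  unfold startTime
  refine Nat.add_le_add le_rfl (Nat.mul_le_mul le_rfl (Finset.sum_le_sum_of_subset ?_))
  intro x hx
  obtain ⟨hxB, hx⟩ := Finset.mem_filter.1 hx
  refine Finset.mem_filter.2 ⟨hxB, ?_⟩
  simp only [ExecBefore, Lb, Rb] at hx ⊢
  omega

/-- Deleting the shorter of two mini-batches with the same leftmost file delays no file:
a file it covered is covered at least as early by the longer one, and every other
traversal can only start earlier. -/
theorem resp_erase_le (B : Finset (Fin N × Fin N)) {a c d : Fin N} (h : c < d)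
    (hd : (a, d) ∈ B) (f : Fin N) :
    resp N s (B.erase (a, c)) f ≤ resp N s B f := by
  classical
  have hne : (a, d) ≠ (a, c) := fun e => h.ne' (congrArg Prod.snd e)
  have hd' : (a, d) ∈ B.erase (a, c) := Finset.mem_erase.2 ⟨hne, hd⟩
  have hkey : ∀ b ∈ B, Covers N b f → ∃ b' ∈ B.erase (a, c), Covers N b' f ∧
      travTime N s (B.erase (a, c)) f b' ≤ travTime N s B f b := by
    intro b hb hbf
    by_cases hbc : b = (a, c)
    · subst hbc
      refine ⟨(a, d), hd', ⟨hbf.1, hbf.2.trans h.le⟩, ?_⟩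
      exact Nat.add_le_add_right ((startTime_erase_le N s B _ _).trans
        (startTime_le_of_le N s B h.le)) _
    · exact ⟨b, Finset.mem_erase.2 ⟨hbc, hb⟩, hbf,
        Nat.add_le_add_right (startTime_erase_le N s B _ _) _⟩
  by_cases hB : (B.filter (fun b => Covers N b f)).Nonempty
  · have hB' : ((B.erase (a, c)).filter (fun b => Covers N b f)).Nonempty := by
      obtain ⟨b, hb⟩ := hB
      obtain ⟨b', hb', hc, -⟩ := hkey b (Finset.mem_filter.1 hb).1 (Finset.mem_filter.1 hb).2
      exact ⟨b', Finset.mem_filter.2 ⟨hb', hc⟩⟩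
    rw [resp, resp, dif_pos hB', dif_pos hB]
    refine Finset.le_inf' _ _ fun b hb => ?_
    obtain ⟨b', hb', hc, hle⟩ := hkey b (Finset.mem_filter.1 hb).1 (Finset.mem_filter.1 hb).2
    exact (Finset.inf'_le _ (Finset.mem_filter.2 ⟨hb', hc⟩)).trans hle
  · have hB' : ¬ ((B.erase (a, c)).filter (fun b => Covers N b f)).Nonempty := fun h' =>
      hB (h'.mono (Finset.filter_subset_filter _ (Finset.erase_subset _ _)))
    rw [resp, resp, dif_neg hB', dif_neg hB]
    unfold phase2Start
    gcongr
    exact Finset.erase_subset _ _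

/-- There exists an optimal schedule in which no two distinct mini-batches share the same
leftmost file. -/
theorem stmt1 (hs : ∀ f, 1 ≤ s f) :
    ∃ B : Finset (Fin N × Fin N), Optimal N s n B ∧
      ∀ b ∈ B, ∀ b' ∈ B, b.1 = b'.1 → b = b' := by
  classical
  obtain ⟨B, hB, hmin⟩ := Finset.exists_min_image
    ((Finset.univ : Finset (Finset (Fin N × Fin N))).filter (Valid N))
    (fun B => toLex (v N s n B, B.card)) ⟨∅, by simp [Valid]⟩
  have hBv : Valid N B := (Finset.mem_filter.1 hB).2
  have hlex : ∀ B', Valid N B' →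
      v N s n B < v N s n B' ∨ v N s n B = v N s n B' ∧ B.card ≤ B'.card := fun B' hB' =>
    Prod.Lex.toLex_le_toLex.1 (hmin B' (Finset.mem_filter.2 ⟨Finset.mem_univ _, hB'⟩))
  have hno : ∀ a c d, (a, c) ∈ B → (a, d) ∈ B → ¬ c < d := by
    intro a c d hc hd hcd
    have hv : v N s n (B.erase (a, c)) ≤ v N s n B :=
      Finset.sum_le_sum fun f _ => Nat.mul_le_mul_left _ (resp_erase_le N s B hcd hd f)
    have hcard := Finset.card_erase_lt_of_mem hc
    have := hlex (B.erase (a, c)) fun b hb => hBv b (Finset.mem_of_mem_erase hb)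
    omega
  refine ⟨B, ⟨hBv, fun B' hB' => (hlex B' hB').elim le_of_lt fun h => h.1.le⟩, ?_⟩
  rintro ⟨a, c⟩ hb ⟨a', d⟩ hb' haa
  obtain rfl : a = a' := haa
  rw [le_antisymm (not_lt.1 (hno a d c hb' hb)) (not_lt.1 (hno a c d hb hb'))]

end LTSP
end

section
/- There exists an optimal schedule B1 such that, for every mini-batch b ∈ B1, the time step at which the read movement of b begins is the first time step at which the head visits position l(b); that is, every mini-batch starts from a position that is being visited for the first time. -/
/-!
Suppose two mini-batches `b`, `b'` of a schedule have the same leftmost block and `b'` is larger.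
Then `b'` is executed first and reads every file of `b`, so the read movement of `b` services
nothing: erasing `b` delays no file (`resp_erase_le`), because every file covered by `b` is reached
earlier through `b'`, and no start time grows when the schedule shrinks. Hence erasing `b` does not
increase the objective (`v_erase_le`). Since there are finitely many schedules, one of
minimum cardinality among the optimal ones exists, and it has no such pair. Its mini-batches
therefore have pairwise distinct leftmost blocks, which is precisely the condition that each of
them starts at the first visit of its leftmost block.
-/

open Finset

namespace LTSP

variable (N : ℕ) (s : Fin N → ℕ) (n : Fin N → ℕ)

open scoped Classical in
/-- First time step at which the head visits position `x` (during the leftward descent of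
Phase 1, having detoured for every mini-batch whose leftmost block lies strictly to the
right of `x`). -/
noncomputable def firstVisit (B : Finset (Fin N × Fin N)) (x : ℕ) : ℕ :=
  (tapeLen N s - x) + 2 * ∑ b' ∈ B.filter (fun b' => x < Lb N s b'), sb N s b'

/-- Positive file sizes make distinct files start at distinct positions. -/
lemma leftPos_strictMono (hs : ∀ f, 1 ≤ s f) : StrictMono (leftPos N s) := by
  intro a b hab
  refine Finset.sum_lt_sum_of_subset (i := a) (Finset.Iio_subset_Iio hab.le) ?_ ?_ (hs a) ?_
  · simpa using hab
  · simp
  · intros; exact Nat.zero_le _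

lemma Rb_mono {b b' : Fin N × Fin N} (h : b.2 ≤ b'.2) : Rb N s b ≤ Rb N s b' := by
  have key : ∀ f : Fin N, leftPos N s f + s f = ∑ j ∈ Finset.Iic f, s j := by
    intro f
    rw [leftPos, ← Finset.Iio_insert, Finset.sum_insert (by simp), add_comm]
  rw [Rb, Rb, key, key]
  exact Finset.sum_le_sum_of_subset (Finset.Iic_subset_Iic.2 h)

lemma startTime_mono {B C : Finset (Fin N × Fin N)} (h : B ⊆ C) (b : Fin N × Fin N) :
    startTime N s B b ≤ startTime N s C b := by
  classical
  unfold startTime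
  have := Finset.sum_le_sum_of_subset (f := sb N s)
    (Finset.filter_subset_filter (fun b' => ExecBefore N s b' b) h)
  omega

/-- Of two mini-batches with the same leftmost block the larger starts no later: by transitivity of
the execution order, whatever precedes it also precedes the smaller one. -/
lemma startTime_le_of_same_left {B : Finset (Fin N × Fin N)} {b b' : Fin N × Fin N}
    (hL : Lb N s b' = Lb N s b) (hR : Rb N s b < Rb N s b') :
    startTime N s B b' ≤ startTime N s B b := by
  classical
  unfold startTime
  have : ∑ c ∈ B.filter (fun c => ExecBefore N s c b'), sb N s c
      ≤ ∑ c ∈ B.filter (fun c => ExecBefore N s c b), sb N s c := by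
    refine Finset.sum_le_sum_of_subset (Finset.monotone_filter_right B ?_)
    intro c _ hc
    simp only [ExecBefore] at hc ⊢
    omega
  omega

/-- Response times are bounded by the traversal time in any covering mini-batch. -/
lemma resp_le {B : Finset (Fin N × Fin N)} {f : Fin N} {b : Fin N × Fin N} (hb : b ∈ B)
    (hf : Covers N b f) : resp N s B f ≤ travTime N s B f b := by
  classical
  have hm : b ∈ B.filter (fun b => Covers N b f) := Finset.mem_filter.2 ⟨hb, hf⟩
  rw [resp, dif_pos ⟨b, hm⟩]
  exact Finset.inf'_le _ hm

open scoped Classical in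
/-- Erasing a mini-batch `b` is harmless when a larger one with the same leftmost block remains:
every file that `b` services has already been serviced. -/
lemma resp_erase_le_s2 (hs : ∀ f, 1 ≤ s f) {B : Finset (Fin N × Fin N)} {b b' : Fin N × Fin N}
    (hb' : b' ∈ B) (hL : Lb N s b' = Lb N s b) (hR : Rb N s b < Rb N s b') (f : Fin N) :
    resp N s (B.erase b) f ≤ resp N s B f := by
  have h1 : b'.1 = b.1 := (leftPos_strictMono N s hs).injective hL
  have h2 : b.2 ≤ b'.2 := by
    by_contra h
    exact absurd (Rb_mono N s (b := b') (b' := b) (not_le.1 h).le) (not_le.2 hR)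
  have hne : b' ≠ b := by rintro rfl; exact lt_irrefl _ hR
  have hsub : B.erase b ⊆ B := Finset.erase_subset _ _
  have hb'' : b' ∈ B.erase b := Finset.mem_erase.2 ⟨hne, hb'⟩
  by_cases h : (B.filter (fun b => Covers N b f)).Nonempty
  · conv_rhs => rw [resp, dif_pos h]
    refine Finset.le_inf' _ _ fun c hc => ?_
    obtain ⟨hcB, hcf⟩ := Finset.mem_filter.1 hc
    by_cases hcb : c = b
    · subst hcb
      refine (resp_le N s hb'' ⟨h1 ▸ hcf.1, hcf.2.trans h2⟩).trans ?_
      have e1 := startTime_mono N s hsub b'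
      have e2 := startTime_le_of_same_left N s (B := B) hL hR
      unfold travTime
      omega
    · refine (resp_le N s (Finset.mem_erase.2 ⟨hcb, hcB⟩) hcf).trans ?_
      exact Nat.add_le_add_right (startTime_mono N s hsub c) _
  · have h' : ¬ ((B.erase b).filter (fun b => Covers N b f)).Nonempty := fun hn =>
      h (hn.mono (Finset.filter_subset_filter _ hsub))
    rw [resp, resp, dif_neg h, dif_neg h']
    have := Finset.sum_le_sum_of_subset (f := sb N s) hsub
    unfold phase2Start
    omega

open scoped Classical in
lemma v_erase_le (hs : ∀ f, 1 ≤ s f) {B : Finset (Fin N × Fin N)} {b b' : Fin N × Fin N}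
    (hb' : b' ∈ B) (hL : Lb N s b' = Lb N s b) (hR : Rb N s b < Rb N s b') :
    v N s n (B.erase b) ≤ v N s n B :=
  Finset.sum_le_sum fun f _ => Nat.mul_le_mul_left _ (resp_erase_le_s2 N s hs hb' hL hR f)

/-- There are finitely many schedules, so some optimal one has the fewest mini-batches. -/
lemma exists_optimal_min_card : ∃ B, Optimal N s n B ∧
    ∀ C, Optimal N s n C → B.card ≤ C.card := by
  classical
  obtain ⟨B₀, h₀, hmin₀⟩ := Set.exists_min_image {B | Valid N B} (v N s n)
    (Set.toFinite _) ⟨∅, by simp [Valid]⟩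
  obtain ⟨B, hB, hmin⟩ := Set.exists_min_image {B | Optimal N s n B} Finset.card
    (Set.toFinite _) ⟨B₀, h₀, hmin₀⟩
  exact ⟨B, hB, hmin⟩

/-- There exists an optimal schedule in which every mini-batch starts from a position that
is being visited for the first time: the read movement of each `b ∈ B` begins at the first
time step at which the head visits position `l(b)`. -/
theorem stmt2 (hs : ∀ f, 1 ≤ s f) :
    ∃ B : Finset (Fin N × Fin N), Optimal N s n B ∧
      ∀ b ∈ B, startTime N s B b = firstVisit N s B (Lb N s b) := by
  classical
  obtain ⟨B, hB, hmin⟩ := exists_optimal_min_card N s n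
  refine ⟨B, hB, fun b hb => ?_⟩
  have key : ∀ b' ∈ B, (ExecBefore N s b' b ↔ Lb N s b < Lb N s b') := by
    intro b' hb'
    refine ⟨?_, Or.inl⟩
    rintro (h | ⟨hL, hR⟩)
    · exact h
    · have hopt : Optimal N s n (B.erase b) :=
        ⟨fun c hc => hB.1 c (Finset.mem_of_mem_erase hc),
          fun C hC => (v_erase_le N s n hs hb' hL hR).trans (hB.2 C hC)⟩
      exact absurd (hmin _ hopt) (not_le.2 (Finset.card_erase_lt_of_mem hb))
  rw [startTime, firstVisit, Finset.filter_congr key]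

end LTSP
end

section
/- There exists an optimal schedule B1 such that for every mini-batch b = (f, f') ∈ B1, both its leftmost file f and its rightmost file f' are associated with at least one request, i.e., n(f) ≥ 1 and n(f') ≥ 1. -/
/-!
Take any optimal schedule `B` (one exists because there are finitely many schedules). Shrink every
mini-batch of `B` to the interval spanned by the requested files it covers, and discard it if it
covers none. The resulting schedule `C` satisfies the condition on end files, and it is still
optimal because no requested file is served later (`resp_le_of_trimmed`):

* A requested file not covered by `B` is not covered by `C` either, and the total detour of `C` is
  at most that of `B`, so its Phase 2 service is not delayed.
* Suppose a requested file `f` is first served within `b ∈ B`, and let `c` be the shrunken `b`.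
  Among the mini-batches of `C` starting at `c.1`, the longest one `e` also covers `f`, and only
  mini-batches starting strictly to the right of `c.1` precede `e`. Such a mini-batch comes from one
  in `B` starting strictly to the right of `b.1` (`Trim.fst_lt`), which therefore precedes `b` in
  `B` and is at least as long. Hence the head has spent no more time on detours, and starting at
  `e.1 = c.1 ≥ b.1` only shortens its path to `f`.

Passing to the longest `e` is needed because shrinking may create ties between left ends, which can
reverse the execution order.
-/

open Finset

namespace LTSP

variable (N : ℕ) (s : Fin N → ℕ) (n : Fin N → ℕ)

section Trimming

lemma leftPos_mono {a b : Fin N} (h : a ≤ b) : leftPos N s a ≤ leftPos N s b :=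
  Finset.sum_le_sum_of_subset (Finset.Iio_subset_Iio h)

lemma leftPos_add_le {a b : Fin N} (h : a < b) : leftPos N s a + s a ≤ leftPos N s b := by
  unfold leftPos
  rw [add_comm, ← Finset.sum_insert (by simp)]
  refine Finset.sum_le_sum_of_subset fun x hx => ?_
  simp only [Finset.mem_insert, Finset.mem_Iio] at hx ⊢
  rcases hx with rfl | hx
  · exact h
  · exact hx.trans h

lemma leftPos_lt_iff (hs : ∀ f, 1 ≤ s f) {a b : Fin N} :
    leftPos N s a < leftPos N s b ↔ a < b := by
  constructor
  · intro h
    by_contra! hba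
    exact absurd (leftPos_mono N s hba) (by omega)
  · intro h
    have := leftPos_add_le N s h
    have := hs a
    omega

lemma rightPos_mono {a b : Fin N} (h : a ≤ b) :
    leftPos N s a + s a ≤ leftPos N s b + s b := by
  rcases h.eq_or_lt with rfl | h
  · exact le_rfl
  · exact (leftPos_add_le N s h).trans (Nat.le_add_right _ _)

/-- `c` is the mini-batch spanned by the requested files covered by `b`: its two end files are
requested and lie in `b`, and it covers every requested file covered by `b`. -/
structure Trim (b c : Fin N × Fin N) : Prop where
  fst_req : 1 ≤ n c.1
  snd_req : 1 ≤ n c.2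
  fst_le : b.1 ≤ c.1
  le : c.1 ≤ c.2
  le_snd : c.2 ≤ b.2
  covers : ∀ g, 1 ≤ n g → Covers N b g → Covers N c g

lemma exists_trim (b : Fin N × Fin N) (h : ∃ f, Covers N b f ∧ 1 ≤ n f) :
    ∃ c, Trim N n b c := by
  classical
  obtain ⟨f, hf⟩ := h
  set S := Finset.univ.filter (fun f => Covers N b f ∧ 1 ≤ n f) with hS
  have hne : S.Nonempty := ⟨f, by simp [hS, hf]⟩
  have h1 := S.min'_mem hne
  have h2 := S.max'_mem hne
  have h1' := (Finset.mem_filter.1 h1).2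
  have h2' := (Finset.mem_filter.1 h2).2
  refine ⟨(S.min' hne, S.max' hne), h1'.2, h2'.2, h1'.1.1, S.min'_le _ h2, h2'.1.2, ?_⟩
  intro g hg hbg
  have hgS : g ∈ S := by simp [hS, hg, hbg]
  exact ⟨S.min'_le _ hgS, S.le_max' _ hgS⟩

lemma exists_optimal : ∃ B, Optimal N s n B := by
  classical
  obtain ⟨B, hB, hmin⟩ := Finset.exists_min_image
    ((Finset.univ : Finset (Finset (Fin N × Fin N))).filter (Valid N)) (v N s n)
    ⟨∅, by simp [Valid]⟩
  exact ⟨B, (Finset.mem_filter.1 hB).2, fun B' hB' => hmin B' (by simp [hB'])⟩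

variable {N n}

/-- Strict inequality between left ends after shrinking comes from strict inequality before. -/
lemma Trim.fst_lt {b c b' c' : Fin N × Fin N} (h : Trim N n b c) (h' : Trim N n b' c')
    (hlt : c.1 < c'.1) : b.1 < b'.1 := by
  by_contra! hle
  -- Otherwise `b'` would cover the requested file `c.1`, which is left of its first one `c'.1`.
  have hcov : Covers N b' c.1 := ⟨hle.trans h.fst_le, hlt.le.trans (h'.le.trans h'.le_snd)⟩
  exact absurd (h'.covers _ h.fst_req hcov).1 (not_le.2 hlt)

lemma Trim.sb_le (s : Fin N → ℕ) {b c : Fin N × Fin N} (h : Trim N n b c) :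
    sb N s c ≤ sb N s b := by
  have h1 := leftPos_mono N s h.fst_le
  have h2 := rightPos_mono N s h.le_snd
  simp only [sb, Rb, Lb]
  omega

lemma Trim.unique {b c c' : Fin N × Fin N} (h : Trim N n b c) (h' : Trim N n b c') : c = c' := by
  have e1 := h.covers _ h'.fst_req ⟨h'.fst_le, h'.le.trans h'.le_snd⟩
  have e2 := h.covers _ h'.snd_req ⟨h'.fst_le.trans h'.le, h'.le_snd⟩
  have e3 := h'.covers _ h.fst_req ⟨h.fst_le, h.le.trans h.le_snd⟩
  have e4 := h'.covers _ h.snd_req ⟨h.fst_le.trans h.le, h.le_snd⟩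
  exact Prod.ext (le_antisymm e1.1 e3.1) (le_antisymm e4.2 e2.2)

/-- If every mini-batch of `Y` is a shrunken mini-batch of `X`, then `Y` is no longer in total. -/
lemma sum_sb_le_of_trim (s : Fin N → ℕ) (X Y : Finset (Fin N × Fin N))
    (h : ∀ c ∈ Y, ∃ b ∈ X, Trim N n b c) :
    ∑ c ∈ Y, sb N s c ≤ ∑ b ∈ X, sb N s b := by
  classical
  choose! g hgX hg using h
  have hinj : Set.InjOn g Y := fun c hc c' hc' he =>
    (hg c hc).unique (he ▸ hg c' hc')
  calc ∑ c ∈ Y, sb N s c ≤ ∑ c ∈ Y, sb N s (g c) := Finset.sum_le_sum fun c hc => (hg c hc).sb_le s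
    _ = ∑ b ∈ Y.image g, sb N s b := (Finset.sum_image hinj).symm
    _ ≤ ∑ b ∈ X, sb N s b := Finset.sum_le_sum_of_subset (Finset.image_subset_iff.2 hgX)

/-- Replacing a schedule by its shrunken mini-batches delays no requested file. -/
lemma resp_le_of_trimmed (s : Fin N → ℕ) (hs : ∀ f, 1 ≤ s f) (B C : Finset (Fin N × Fin N))
    (hC : ∀ c, c ∈ C ↔ ∃ b ∈ B, Trim N n b c) (f : Fin N) (hf : 1 ≤ n f) :
    resp N s C f ≤ resp N s B f := by
  classical
  unfold resp
  by_cases hB : (B.filter (fun b => Covers N b f)).Nonempty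
  · rw [dif_pos hB]
    obtain ⟨b, hb, hbe⟩ := Finset.exists_mem_eq_inf' hB (travTime N s B f)
    rw [hbe]
    obtain ⟨hbB, hbf⟩ := Finset.mem_filter.1 hb
    obtain ⟨c, hbc⟩ := exists_trim N n b ⟨f, hbf, hf⟩
    have hcC : c ∈ C := (hC c).2 ⟨b, hbB, hbc⟩
    obtain ⟨e, he, hmax⟩ := Finset.exists_max_image (C.filter (fun d => d.1 = c.1)) Prod.snd
      ⟨c, by simp [hcC]⟩
    obtain ⟨heC, he1⟩ := Finset.mem_filter.1 he
    have hcf := hbc.covers f hf hbf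
    have hef : Covers N e f := ⟨he1 ▸ hcf.1, hcf.2.trans (hmax c (by simp [hcC]))⟩
    have hmem : e ∈ C.filter (fun b => Covers N b f) := Finset.mem_filter.2 ⟨heC, hef⟩
    rw [dif_pos ⟨e, hmem⟩]
    refine (Finset.inf'_le _ hmem).trans ?_
    have hsum : ∑ d ∈ C.filter (fun d => ExecBefore N s d e), sb N s d
        ≤ ∑ d ∈ B.filter (fun d => ExecBefore N s d b), sb N s d := by
      refine sum_sb_le_of_trim (n := n) s _ _ ?_
      intro d hd
      obtain ⟨hdC, hde⟩ := Finset.mem_filter.1 hd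
      obtain ⟨b', hb'B, hb'd⟩ := (hC d).1 hdC
      refine ⟨b', Finset.mem_filter.2 ⟨hb'B, Or.inl ?_⟩, hb'd⟩
      refine (leftPos_lt_iff N s hs).2 (hbc.fst_lt hb'd ?_)
      rcases hde with h | ⟨h1, h2⟩
      · exact he1 ▸ (leftPos_lt_iff N s hs).1 h
      · -- A mini-batch tied with `e` on the left cannot be longer, by the choice of `e`.
        exfalso
        have hd1 : d.1 = e.1 := by
          refine le_antisymm (not_lt.1 fun h => ?_) (not_lt.1 fun h => ?_)
          · exact absurd ((leftPos_lt_iff N s hs).2 h) (by simp only [Lb] at h1; omega)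
          · exact absurd ((leftPos_lt_iff N s hs).2 h) (by simp only [Lb] at h1; omega)
        have := rightPos_mono N s (hmax d (Finset.mem_filter.2 ⟨hdC, hd1.trans he1⟩))
        simp only [Rb] at h2
        omega
    have h1 : leftPos N s b.1 ≤ leftPos N s e.1 := leftPos_mono N s (he1 ▸ hbc.fst_le)
    simp only [travTime, startTime, Lb]
    omega
  · have hCe : ¬ (C.filter (fun b => Covers N b f)).Nonempty := by
      rintro ⟨c, hc⟩
      obtain ⟨hcC, hcf⟩ := Finset.mem_filter.1 hc
      obtain ⟨b, hbB, hbc⟩ := (hC c).1 hcC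
      exact hB ⟨b, Finset.mem_filter.2
        ⟨hbB, hbc.fst_le.trans hcf.1, hcf.2.trans hbc.le_snd⟩⟩
    rw [dif_neg hB, dif_neg hCe]
    have := sum_sb_le_of_trim (n := n) s B C fun c hc => (hC c).1 hc
    simp only [phase2Start]
    omega

end Trimming

/-- There exists an optimal schedule in which the leftmost and the rightmost files of every
mini-batch are associated with at least one request each. -/
theorem stmt3 (hs : ∀ f, 1 ≤ s f) :
    ∃ B : Finset (Fin N × Fin N), Optimal N s n B ∧
      ∀ b ∈ B, 1 ≤ n b.1 ∧ 1 ≤ n b.2 := by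
  classical
  obtain ⟨B, hBv, hBmin⟩ := exists_optimal N s n
  let C := Finset.univ.filter (fun c => ∃ b ∈ B, Trim N n b c)
  have hC : ∀ c, c ∈ C ↔ ∃ b ∈ B, Trim N n b c := fun c => by simp [C]
  refine ⟨C, ⟨fun c hc => ?_, fun B' hB' => le_trans ?_ (hBmin B' hB')⟩, fun c hc => ?_⟩
  · obtain ⟨b, -, h⟩ := (hC c).1 hc
    exact h.le
  · refine Finset.sum_le_sum fun f _ => ?_
    rcases Nat.eq_zero_or_pos (n f) with h0 | hf
    · simp [h0]
    · exact Nat.mul_le_mul_left _ (resp_le_of_trimmed s hs B C hC f hf)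
  · obtain ⟨b, -, h⟩ := (hC c).1 hc
    exact ⟨h.fst_req, h.snd_req⟩

end LTSP
end

section
/- The Simple Schedule Strategy (the schedule B1 = ∅, which moves the head directly from position m to position 1 and services all requests in Phase 2) is not a c-approximation for any constant c: for every c > 0 there exists an LTSP instance and a schedule B1 such that v(∅) > c · v(B1). -/
/-!
Take a tape with a long, never requested file of size `K` on the left and a file of size `1`
with a single request on the right. The schedule `∅` serves that request only in Phase 2, after
traversing the long file twice, at time `(K + 1) + K`. The schedule consisting of the atomic
mini-batch on the right file serves it at time `1`. Choosing `K > c` gives the claim.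
-/

open Finset

namespace LTSP

variable (N : ℕ) (s : Fin N → ℕ) (n : Fin N → ℕ)

/-- The Simple Schedule Strategy (the empty schedule) is not a `c`-approximation for any
constant `c`: for every `c > 0` there exist an LTSP instance and a schedule `B1` such that
`v(∅) > c · v(B1)`. -/
theorem stmt8 : ∀ c : ℝ, 0 < c →
    ∃ (N : ℕ) (s n : Fin N → ℕ), (∀ f, 1 ≤ s f) ∧
      ∃ B1 : Finset (Fin N × Fin N), Valid N B1 ∧
        c * (v N s n B1 : ℝ) < (v N s n (∅ : Finset (Fin N × Fin N)) : ℝ) := by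
  intro c hc
  obtain ⟨K, hK⟩ := exists_nat_gt c
  have hK1 : 1 ≤ K := by
    have h : (0 : ℝ) < K := hc.trans hK
    exact_mod_cast h
  have hpos : leftPos 2 ![K, 1] 1 = K := by
    have h : (Finset.Iio (1 : Fin 2)) = {0} := by decide
    simp [leftPos, h]
  have hlen : tapeLen 2 ![K, 1] = K + 1 := by simp [tapeLen]
  have hfast : v 2 ![K, 1] ![0, 1] {((1 : Fin 2), (1 : Fin 2))} = 1 := by
    have hcov : Covers 2 ((1 : Fin 2), (1 : Fin 2)) 1 := ⟨le_rfl, le_rfl⟩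
    simp [v, resp, hcov, travTime, startTime, Lb, hpos, hlen, Finset.filter_singleton, ExecBefore]
  have hslow : v 2 ![K, 1] ![0, 1] ∅ = 2 * K + 1 := by
    simp [v, resp, phase2Start, hpos, hlen]
    ring
  refine ⟨2, ![K, 1], ![0, 1], ?_, {(1, 1)}, ?_, ?_⟩
  · simp [Fin.forall_fin_two, hK1]
  · simp [Valid]
  · rw [hfast, hslow]
    push_cast
    linarith

end LTSP
end

section
/- The approximation factor 3 of the Greedy Strategy is tight: for every ε > 0 there exists an LTSP instance and a schedule B1 such that v(B1^GS) > (3 − ε) · v(B1). In particular, for the instance with two files f_1, f_2 where s(f_1) = 1, n(f_1) = m − 1, s(f_2) = m − 1, n(f_2) = 1, the ratio v(B1^GS) / v(∅) converges to 3 as m → ∞. -/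
/-!
The bound `3` is already approached by the two-file instances of the statement. Write the sizes as
`1, k` and the request counts as `k, 1`, so that `m = k + 1`.

* With no mini-batch, `f_1` is served at time `m` and `f_2` at time `m + 1`, so the value is
  `k (k + 1) + (k + 2) = k² + 2k + 2`  (`v_empty`).
* The Greedy Strategy first detours through `f_2`, which starts at time `k` and costs `2k`; then
  `f_1`, which carries all but one of the requests, waits until `3k + 1`. The value is
  `k (3k + 1) + k = 3k² + 2k`  (`v_greedy`).

The quotient tends to `3`, and the existence of instances with ratio above `3 - ε` follows from
this limit, taking the empty schedule for `B1`.
-/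

open Finset

namespace LTSP

variable (N : ℕ) (s : Fin N → ℕ) (n : Fin N → ℕ)

lemma leftPos_two_zero (s : Fin 2 → ℕ) : leftPos 2 s 0 = 0 := by
  have h : (Finset.Iio (0 : Fin 2)) = ∅ := by decide
  simp [leftPos, h]

lemma leftPos_two_one (s : Fin 2 → ℕ) : leftPos 2 s 1 = s 0 := by
  have h : (Finset.Iio (1 : Fin 2)) = {0} := by decide
  simp [leftPos, h]

lemma v_empty (k : ℕ) : v 2 ![1, k] ![k, 1] ∅ = k ^ 2 + 2 * k + 2 := by
  simp [v, resp, phase2Start, tapeLen, Fin.sum_univ_two, leftPos_two_zero, leftPos_two_one]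
  ring

lemma GS_two (k : ℕ) : GS 2 ![k, 1] (by norm_num) = {(1, 1)} := by
  have h : (Finset.univ.filter
      (fun f : Fin 2 => 0 < (![k, 1] : Fin 2 → ℕ) f ∧ f ≠ ⟨0, by norm_num⟩)) = {1} := by
    ext f
    fin_cases f <;> simp
  rw [GS, h, Finset.image_singleton]

lemma v_greedy (k : ℕ) :
    v 2 ![1, k] ![k, 1] (GS 2 ![k, 1] (by norm_num)) = 3 * k ^ 2 + 2 * k := by
  classical
  have h0 : resp 2 ![1, k] {(1, 1)} 0 = 3 * k + 1 := by
    have h : ¬ (({((1 : Fin 2), (1 : Fin 2))} : Finset (Fin 2 × Fin 2)).filter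
        (fun b => Covers 2 b 0)).Nonempty := by
      simp [Finset.filter_singleton, Covers]
    unfold resp
    rw [dif_neg (by convert h)]
    simp [phase2Start, tapeLen, sb, Rb, Lb, leftPos_two_zero, leftPos_two_one]
    ring
  have h1 : resp 2 ![1, k] {(1, 1)} 1 = k := by
    have h : ({((1 : Fin 2), (1 : Fin 2))} : Finset (Fin 2 × Fin 2)).filter
        (fun b => Covers 2 b 1) = {(1, 1)} :=
      Finset.filter_true_of_mem (by simp [Covers])
    -- The only mini-batch is not executed before itself, so no detour delays it.
    have ht : travTime 2 ![1, k] {(1, 1)} 1 (1, 1) = k := by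
      simp [travTime, startTime, ExecBefore, tapeLen, Lb, leftPos_two_one]
    unfold resp
    rw [dif_pos (by convert Finset.singleton_nonempty ((1 : Fin 2), (1 : Fin 2)))]
    refine Eq.trans ?_ ht
    refine Eq.trans (Finset.inf'_congr _ (t := {(1, 1)}) (by convert h) (fun _ _ => rfl)) ?_
    exact Finset.inf'_singleton _
  rw [GS_two, v, Fin.sum_univ_two, h0, h1]
  simp
  ring

/-- The ratio of the two closed forms tends to `3`: divide both by `k²`. -/
lemma tendsto_ratio : Filter.Tendsto
    (fun k : ℕ => ((3 * k ^ 2 + 2 * k : ℕ) : ℝ) / ((k ^ 2 + 2 * k + 2 : ℕ) : ℝ))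
    Filter.atTop (nhds 3) := by
  have hinv := tendsto_inv_atTop_nhds_zero_nat (𝕜 := ℝ)
  have h : Filter.Tendsto (fun k : ℕ => (3 + 2 * (k : ℝ)⁻¹) /
      (1 + 2 * (k : ℝ)⁻¹ + 2 * ((k : ℝ)⁻¹ * (k : ℝ)⁻¹))) Filter.atTop (nhds 3) := by
    have := ((hinv.const_mul 2).const_add 3).div
      (((hinv.const_mul 2).const_add 1).add ((hinv.mul hinv).const_mul 2)) (by norm_num)
    simpa [Pi.div_def] using this
  refine h.congr' ?_
  filter_upwards [Filter.eventually_gt_atTop 0] with k hk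
  have hk' : (0 : ℝ) < k := by exact_mod_cast hk
  push_cast
  field_simp

/-- The approximation factor 3 of the Greedy Strategy is tight: for every `ε > 0` there exist
an LTSP instance and a schedule `B1` with `v(B1^GS) > (3 - ε) · v(B1)`; in particular, for
the two-file instance with `s(f_1) = 1`, `n(f_1) = m - 1`, `s(f_2) = m - 1`, `n(f_2) = 1`,
the ratio `v(B1^GS) / v(∅)` converges to `3` as `m → ∞`. -/
theorem stmt10 :
    (∀ ε : ℝ, 0 < ε →
      ∃ (N : ℕ) (s n : Fin N → ℕ) (hN : 0 < N), (∀ f, 1 ≤ s f) ∧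
        ∃ B1 : Finset (Fin N × Fin N), Valid N B1 ∧
          (3 - ε) * (v N s n B1 : ℝ) < (v N s n (GS N n hN) : ℝ)) ∧
    Filter.Tendsto
      (fun m : ℕ =>
        (v 2 ![1, m - 1] ![m - 1, 1] (GS 2 ![m - 1, 1] (by norm_num)) : ℝ) /
          (v 2 ![1, m - 1] ![m - 1, 1] (∅ : Finset (Fin 2 × Fin 2)) : ℝ))
      Filter.atTop (nhds 3) := by
  have hlim : Filter.Tendsto
      (fun m : ℕ =>
        (v 2 ![1, m - 1] ![m - 1, 1] (GS 2 ![m - 1, 1] (by norm_num)) : ℝ) /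
          (v 2 ![1, m - 1] ![m - 1, 1] (∅ : Finset (Fin 2 × Fin 2)) : ℝ))
      Filter.atTop (nhds 3) := by
    simp only [v_greedy, v_empty]
    exact tendsto_ratio.comp (Filter.tendsto_sub_atTop_nat 1)
  refine ⟨fun ε hε => ?_, hlim⟩
  -- `m ≥ 2` makes the second file nonempty.
  obtain ⟨m, hm, hm2⟩ := ((hlim.eventually_const_lt (show 3 - ε < 3 by linarith)).and
    (Filter.eventually_ge_atTop 2)).exists
  refine ⟨2, ![1, m - 1], ![m - 1, 1], by norm_num, ?_, ∅, by simp [Valid], ?_⟩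
  · intro f
    fin_cases f
    · simp
    · simp only [Fin.mk_one, Matrix.cons_val_one, Matrix.cons_val_fin_one]
      omega
  · have hpos : (0 : ℝ) < v 2 ![1, m - 1] ![m - 1, 1] ∅ := by
      rw [v_empty]
      positivity
    exact (lt_div_iff₀ hpos).mp hm

end LTSP
end

section
/- Satisfaction of Inequality (2) is preserved under removal of atomic mini-batches: let B1 be a schedule consisting solely of atomic mini-batches, let B1' ⊆ B1, and let f be a file with (f,f) ∈ B1'. If f satisfies Inequality (2) with respect to B1, then f satisfies Inequality (2) with respect to B1'. -/
open Finset

namespace LTSP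

variable (N : ℕ) (s : Fin N → ℕ) (n : Fin N → ℕ)

/-- Satisfaction of Inequality (2) is preserved under removal of atomic mini-batches: if `B`
consists solely of atomic mini-batches, `B' ⊆ B`, `(f, f) ∈ B'`, and `f` satisfies
Inequality (2) with respect to `B`, then `f` satisfies Inequality (2) with respect to `B'`. -/
theorem stmt11 (hs : ∀ f, 1 ≤ s f) (B B' : Finset (Fin N × Fin N))
    (hB : Valid N B) (hatomic : ∀ b ∈ B, b.1 = b.2) (hsub : B' ⊆ B)
    (f : Fin N) (hf : (f, f) ∈ B') (h2 : Ineq2 N s n B f) :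
    Ineq2 N s n B' f := by
  classical
  -- Both sides are monotone in the schedule: the left one increasing, the right one decreasing.
  have hL : ineqLHS N s n B' f ≤ ineqLHS N s n B f :=
    Nat.mul_le_mul_left _ (Nat.add_le_add_left
      (Finset.sum_le_sum_of_subset (Finset.filter_subset_filter _ hsub)) _)
  have hR : ineqRHS N s n B f ≤ ineqRHS N s n B' f := by
    refine Nat.mul_le_mul_left _ (Nat.add_le_add_left (Finset.sum_le_sum_of_subset ?_) _)
    refine Finset.monotone_filter_right _ fun f' _ h => ⟨?_, h.2⟩
    rintro ⟨b, hb, hc⟩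
    exact h.1 ⟨b, hsub hb, hc⟩
  exact hL.trans_lt (lt_of_lt_of_le h2 hR)

end LTSP
end

section
/- If s(f) = k for some fixed k ∈ ℕ, k ≥ 1, and n(f) = 1 for every file f, then the empty schedule B1 = ∅ is optimal: v(∅) ≤ v(B1) for every schedule B1. -/
/-!
In units of `k`, the empty schedule answers file `g` at time `N + g`. Let a schedule `B` answer
each covered file `f` within the mini-batch `b_f`, whose first file is `A f`; put `A f = 0` for an
uncovered file. Compared with the empty schedule, a covered file `g` gains `2 * A g` and loses twice
the total size of the mini-batches executed before `b_g`, while an uncovered file loses twice the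
total size of all mini-batches. If `g < A f`, then `b_f` is among the mini-batches charged to `g`:
either `g` is uncovered, or `b_g` starts at or to the left of `g`, hence is executed after `b_f`.
The mini-batches charged to `g` thus cover every `f` with `g < A f`, so the loss at `g` is at least
`2 * #{f | g < A f}` (`resp_lower_bound`). Counting the pairs `(f, g)` with `g < A f` in two ways
shows that these losses add up to `2 * ∑ f, A f`, the total gain.
-/


open Finset

namespace LTSP

variable (N : ℕ) (s : Fin N → ℕ) (n : Fin N → ℕ)

lemma leftPos_const {k : ℕ} (hs : ∀ f, s f = k) (f : Fin N) : leftPos N s f = k * f := by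
  simp [leftPos, hs, mul_comm]

lemma tapeLen_const {k : ℕ} (hs : ∀ f, s f = k) : tapeLen N s = k * N := by
  simp [tapeLen, hs, mul_comm]

lemma sb_const {k : ℕ} (hs : ∀ f, s f = k) (b : Fin N × Fin N) :
    sb N s b = k * (Finset.Icc b.1 b.2).card := by
  simp only [sb, Rb, Lb, leftPos_const N s hs, hs, Fin.card_Icc, Nat.mul_sub, Nat.mul_add, mul_one]

/-- A family of mini-batches covering every file of `S` has total size at least that of `S`. -/
lemma card_le_sum_sb {k : ℕ} (hs : ∀ f, s f = k) (S : Finset (Fin N))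
    (T : Finset (Fin N × Fin N)) (h : ∀ f ∈ S, ∃ b ∈ T, Covers N b f) :
    k * S.card ≤ ∑ b ∈ T, sb N s b := by
  have h1 : S ⊆ T.biUnion (fun b => Finset.Icc b.1 b.2) := by
    intro f hf
    obtain ⟨b, hb, hc⟩ := h f hf
    exact Finset.mem_biUnion.2 ⟨b, hb, Finset.mem_Icc.2 hc⟩
  calc k * S.card ≤ k * ∑ b ∈ T, (Finset.Icc b.1 b.2).card :=
        Nat.mul_le_mul_left _ ((Finset.card_le_card h1).trans Finset.card_biUnion_le)
    _ = ∑ b ∈ T, sb N s b := by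
        rw [Finset.mul_sum]
        exact Finset.sum_congr rfl fun b _ => (sb_const N s hs b).symm

open scoped Classical in
/-- The response time of `g` under `B`, compared with its response time `k * (N + g)` under the
empty schedule. The number `A f` is the index of the first file of the mini-batch answering `f`, or
`0` if `f` is uncovered. -/
lemma resp_lower_bound {k : ℕ} (hk : 1 ≤ k) (hs : ∀ f, s f = k) (B : Finset (Fin N × Fin N)) :
    ∃ A : Fin N → ℕ, (∀ f, A f ≤ f) ∧ ∀ g : Fin N,
      k * (N + g) + 2 * (k * (Finset.univ.filter (fun f => (g : ℕ) < A f)).card) ≤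
        resp N s B g + 2 * (k * A g) := by
  have key : ∀ f : Fin N, ∃ a : ℕ, a ≤ f ∧
      ((∃ b ∈ B, Covers N b f ∧ a = b.1 ∧ resp N s B f = travTime N s B f b) ∨
        (a = 0 ∧ resp N s B f = phase2Start N s B + leftPos N s f)) := by
    intro f
    by_cases h : (B.filter (fun b => Covers N b f)).Nonempty
    · obtain ⟨b, hb, he⟩ := Finset.exists_mem_eq_inf' h (travTime N s B f)
      rw [Finset.mem_filter] at hb
      refine ⟨b.1, hb.2.1, Or.inl ⟨b, hb.1, hb.2, rfl, ?_⟩⟩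
      rw [resp, dif_pos h, he]
    · exact ⟨0, Nat.zero_le _, Or.inr ⟨rfl, by rw [resp, dif_neg h]⟩⟩
  choose A hA hA' using key
  refine ⟨A, hA, fun g => ?_⟩
  have hcov : ∀ f, (g : ℕ) < A f → ∃ b ∈ B, Covers N b f ∧ A f = b.1 := by
    intro f hf
    rcases hA' f with ⟨b, hb, hc, ha, -⟩ | ⟨h0, -⟩
    · exact ⟨b, hb, hc, ha⟩
    · omega
  rcases hA' g with ⟨b, hb, hc, ha, hr⟩ | ⟨h0, hr⟩
  · have hag := hA g
    have h1 := card_le_sum_sb N s hs (Finset.univ.filter (fun f => (g : ℕ) < A f))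
      (B.filter (fun b' => ExecBefore N s b' b)) (by
        intro f hf
        have hgf := (Finset.mem_filter.1 hf).2
        obtain ⟨b', hb', hc', ha'⟩ := hcov f hgf
        refine ⟨b', Finset.mem_filter.2 ⟨hb', Or.inl ?_⟩, hc'⟩
        rw [Lb, Lb, leftPos_const N s hs, leftPos_const N s hs]
        exact Nat.mul_lt_mul_of_pos_left (by omega) hk)
    have h2 : k * A g ≤ k * g := Nat.mul_le_mul_left _ hag
    have h3 : k * (g : ℕ) ≤ k * N := Nat.mul_le_mul_left _ g.2.le
    rw [hr, travTime, startTime, Lb, leftPos_const N s hs, leftPos_const N s hs,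
      tapeLen_const N s hs, ← ha, Nat.mul_add]
    omega
  · have h1 := card_le_sum_sb N s hs (Finset.univ.filter (fun f => (g : ℕ) < A f)) B (by
      intro f hf
      obtain ⟨b', hb', hc', -⟩ := hcov f (Finset.mem_filter.1 hf).2
      exact ⟨b', hb', hc'⟩)
    rw [hr, phase2Start, leftPos_const N s hs, tapeLen_const N s hs, Nat.mul_add]
    omega

lemma resp_empty {k : ℕ} (hs : ∀ f, s f = k) (g : Fin N) :
    resp N s ∅ g = k * (N + g) := by
  simp [resp, phase2Start, leftPos_const N s hs, tapeLen_const N s hs, Nat.mul_add]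

/-- Double counting of the pairs `(f, g)` with `g < A f`. -/
lemma sum_card_lt (A : Fin N → ℕ) (hA : ∀ f, A f ≤ f) :
    ∑ g : Fin N, (Finset.univ.filter (fun f => (g : ℕ) < A f)).card = ∑ f, A f := by
  have h := Finset.sum_card_bipartiteAbove_eq_sum_card_bipartiteBelow
    (s := (Finset.univ : Finset (Fin N))) (t := (Finset.univ : Finset (Fin N)))
    (fun (g f : Fin N) => (g : ℕ) < A f)
  refine h.trans (Finset.sum_congr rfl fun f _ => ?_)
  have hlt : A f < N := (hA f).trans_lt f.2
  have : Finset.univ.bipartiteBelow (fun g f : Fin N => (g : ℕ) < A f) f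
      = Finset.Iio (⟨A f, hlt⟩ : Fin N) := by
    ext g
    simp [Finset.bipartiteBelow, Fin.lt_def]
  rw [this, Fin.card_Iio]

/-- If all files have the same size `k ≥ 1` and exactly one request each, then the empty
schedule is optimal. -/
theorem stmt14 (k : ℕ) (hk : 1 ≤ k) (hs : ∀ f, s f = k) (hn : ∀ f, n f = 1) :
    ∀ B1 : Finset (Fin N × Fin N), Valid N B1 →
      v N s n (∅ : Finset (Fin N × Fin N)) ≤ v N s n B1 := by
  intro B _
  classical
  obtain ⟨A, hA, h⟩ := resp_lower_bound N s hk hs B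
  have hsum := Finset.sum_le_sum fun g (_ : g ∈ (Finset.univ : Finset (Fin N))) => h g
  simp only [Finset.sum_add_distrib, ← Finset.mul_sum] at hsum
  have hd := sum_card_lt N A hA
  simp only [v, hn, one_mul, resp_empty N s hs]
  simp only [Finset.sum_add_distrib, ← Finset.mul_sum]
  simp only [hd] at hsum
  omega


end LTSP
end

section
/- Assume s(f) = k for some fixed k ∈ ℕ, k ≥ 1, and n(f) = 1 for every file f. A file f is a hole of a schedule B1 if f ∉ F(B1) and there exists a file f' ∈ F(B1) with l(f') < l(f). If a schedule B1 consists solely of atomic mini-batches and contains a hole, then B1 is not optimal: there exists a schedule B1' with v(B1') < v(B1). -/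
/-!
The proof is an exchange argument. An atomic schedule is determined by the set `S` of files it
reads in Phase 1. If it has a hole, then there is an adjacent pair `g ∈ S`, `h = g + 1 ∉ S`
(`exists_adjacent`). Let `S'` be `S` with `g` replaced by `h`, that is, the image of `S` under the
transposition `σ = (g h)`. The number of mini-batches executed before a given one is not changed by
`σ`, because the only pair whose order `σ` reverses is `{g, h}` and `h ∉ S`
(`card_above_swap`). By the explicit response times (`resp_diag_mem`, `resp_diag_not_mem`), the
response time of `σ f` under `S'` is thus at most that of `f` under `S`: Phase 1 response times
decrease in the position and `f ≤ σ f` on `S`, while Phase 2 response times increase in the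
position and `σ f ≤ f` off `S`. The inequality is strict for `f = g`; summing over all files
gives the claim.
-/

open Finset

namespace LTSP

variable (N : ℕ) (s : Fin N → ℕ) (n : Fin N → ℕ)

/-- The schedule consisting of the atomic mini-batches of the files in `S`. -/
def diagSched (S : Finset (Fin N)) : Finset (Fin N × Fin N) := S.image (fun f => (f, f))

lemma mem_diagSched (S : Finset (Fin N)) (b : Fin N × Fin N) :
    b ∈ diagSched N S ↔ b.1 ∈ S ∧ b.1 = b.2 := by
  rcases b with ⟨x, y⟩
  simp only [diagSched, Finset.mem_image, Prod.mk.injEq]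
  constructor
  · rintro ⟨a, ha, rfl, rfl⟩
    exact ⟨ha, rfl⟩
  · rintro ⟨hx, rfl⟩
    exact ⟨x, hx, rfl, rfl⟩

lemma leftPos_eq {k : ℕ} (hs : ∀ f, s f = k) (f : Fin N) : leftPos N s f = f.val * k := by
  simp [leftPos, hs]

lemma sb_diag {k : ℕ} (hs : ∀ f, s f = k) (f : Fin N) : sb N s (f, f) = k := by
  simp [sb, Rb, Lb, hs]

lemma execBefore_diag {k : ℕ} (hk : 1 ≤ k) (hs : ∀ f, s f = k) (f g : Fin N) :
    ExecBefore N s (g, g) (f, f) ↔ f < g := by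
  have hk' : 0 < k := hk
  simp only [ExecBefore, Lb, Rb, leftPos_eq N s hs, hs, Nat.mul_lt_mul_right hk', Fin.lt_def]
  constructor
  · rintro (h | ⟨h1, h2⟩)
    · exact h
    · omega
  · exact Or.inl

/-- Phase 1 response time: the distance from the right end, plus a detour of `2 * k` for each file
of `S` to the right of `f`. -/
lemma resp_diag_mem {k : ℕ} (hk : 1 ≤ k) (hs : ∀ f, s f = k) (S : Finset (Fin N)) (f : Fin N)
    (hf : f ∈ S) :
    resp N s (diagSched N S) f =
      (N * k - f.val * k) + 2 * ((S.filter (fun j => f < j)).card * k) := by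
  classical
  have hcov : ∀ b, b ∈ (diagSched N S).filter (fun b => Covers N b f) ↔ b = (f, f) := by
    rintro ⟨x, y⟩
    simp only [Finset.mem_filter, mem_diagSched, Prod.mk.injEq]
    constructor
    · rintro ⟨⟨_, rfl⟩, h1, h2⟩
      exact ⟨le_antisymm h1 h2, le_antisymm h1 h2⟩
    · rintro ⟨rfl, rfl⟩
      exact ⟨⟨hf, rfl⟩, le_rfl, le_rfl⟩
  have htrav : travTime N s (diagSched N S) f (f, f) =
      (N * k - f.val * k) + 2 * ((S.filter (fun j => f < j)).card * k) := by
    have hfil : (diagSched N S).filter (fun b' => ExecBefore N s b' (f, f)) =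
        diagSched N (S.filter (fun j => f < j)) := by
      ext ⟨x, y⟩
      simp only [Finset.mem_filter, mem_diagSched]
      constructor
      · rintro ⟨⟨hx, rfl⟩, h⟩
        exact ⟨⟨hx, (execBefore_diag N s hk hs f x).1 h⟩, rfl⟩
      · rintro ⟨⟨hx, h⟩, rfl⟩
        exact ⟨⟨hx, rfl⟩, (execBefore_diag N s hk hs f x).2 h⟩
    have hsum : ∑ b' ∈ (diagSched N S).filter (fun b' => ExecBefore N s b' (f, f)), sb N s b' =
        (S.filter (fun j => f < j)).card * k := by
      rw [hfil, diagSched, Finset.sum_image (by intro a _ b _ h; exact (Prod.mk.inj h).1)]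
      simp [sb_diag N s hs]
    have hT : tapeLen N s = N * k := by simp [tapeLen, hs]
    unfold travTime startTime
    -- The filters on both sides differ only in their decidability instances.
    convert_to (tapeLen N s - Lb N s (f, f)) + 2 * ∑ b' ∈ (diagSched N S).filter
      (fun b' => ExecBefore N s b' (f, f)), sb N s b' + (leftPos N s f - Lb N s (f, f)) = _
    rw [hsum, hT]
    simp [Lb, leftPos_eq N s hs]
  unfold resp
  rw [dif_pos ⟨(f, f), by convert (hcov (f, f)).2 rfl⟩, ← htrav]
  apply le_antisymm
  · exact Finset.inf'_le _ (by convert (hcov (f, f)).2 rfl)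
  · refine Finset.le_inf' _ _ fun b hb => ?_
    rw [(hcov b).1 (by convert hb)]

lemma resp_diag_not_mem {k : ℕ} (hs : ∀ f, s f = k) (S : Finset (Fin N)) (f : Fin N)
    (hf : f ∉ S) :
    resp N s (diagSched N S) f = N * k + 2 * (S.card * k) + f.val * k := by
  have hT : tapeLen N s = N * k := by simp [tapeLen, hs]
  unfold resp
  rw [dif_neg, phase2Start, hT, leftPos_eq N s hs, diagSched,
    Finset.sum_image (by intro a _ b _ h; exact (Prod.mk.inj h).1)]
  · simp [sb_diag N s hs]
  · rintro ⟨⟨x, y⟩, hb⟩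
    simp only [Finset.mem_filter, mem_diagSched] at hb
    obtain ⟨⟨hx, rfl⟩, h1, h2⟩ := hb
    exact hf (le_antisymm h1 h2 ▸ hx)

/-- A set of files with a hole contains a file whose right neighbour is a hole. -/
lemma exists_adjacent (S : Finset (Fin N)) (g h : Fin N) (hg : g ∈ S) (hh : h ∉ S)
    (hgh : g < h) : ∃ g' h' : Fin N, g' ∈ S ∧ h' ∉ S ∧ h'.val = g'.val + 1 := by
  by_contra! hcon
  have key : ∀ d : ℕ, ∀ hd : g.val + d < N, (⟨g.val + d, hd⟩ : Fin N) ∈ S := by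
    intro d
    induction d with
    | zero => intro _; exact hg
    | succ d ih =>
      intro hd
      by_contra hn
      exact hcon ⟨g.val + d, by omega⟩ _ (ih (by omega)) hn rfl
  have hlt : g.val < h.val := hgh
  have := key (h.val - g.val) (by omega)
  apply hh
  convert this
  omega

lemma swap_val (g h f : Fin N) : (Equiv.swap g h f).val =
    if f.val = g.val then h.val else if f.val = h.val then g.val else f.val := by
  rw [Equiv.swap_apply_def]
  simp only [Fin.ext_iff]
  split_ifs <;> rfl

/-- Moving `g` to the adjacent hole `h` preserves the order of the files in `S`, hence also the
number of files of `S` above a given one. -/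
lemma card_above_swap (S : Finset (Fin N)) (g h f : Fin N) (hh : h ∉ S)
    (hgh : h.val = g.val + 1) (hf : f ∈ S) :
    ((S.map (Equiv.swap g h).toEmbedding).filter (fun j => Equiv.swap g h f < j)).card =
      (S.filter (fun j => f < j)).card := by
  rw [Finset.filter_map, Finset.card_map]
  congr 1
  refine Finset.filter_congr fun j hj => ?_
  have h1 : j.val ≠ h.val := fun e => hh (Fin.ext e ▸ hj)
  have h2 : f.val ≠ h.val := fun e => hh (Fin.ext e ▸ hf)
  simp only [Function.comp, Equiv.coe_toEmbedding, Fin.lt_def, swap_val]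
  split_ifs <;> omega

/-- Assume all files have the same size `k ≥ 1` and exactly one request each. If a schedule
consists solely of atomic mini-batches and has a hole (a file `f ∉ F(B1)` with some file
`f' ∈ F(B1)` satisfying `l(f') < l(f)`), then it is not optimal. -/
theorem stmt16 (k : ℕ) (hk : 1 ≤ k) (hs : ∀ f, s f = k) (hn : ∀ f, n f = 1)
    (B1 : Finset (Fin N × Fin N)) (hB : Valid N B1) (hatomic : ∀ b ∈ B1, b.1 = b.2)
    (hhole : ∃ f : Fin N, ¬ InF N B1 f ∧ ∃ f' : Fin N, InF N B1 f' ∧ lB N s f' < lB N s f) :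
    ∃ B1' : Finset (Fin N × Fin N), Valid N B1' ∧ v N s n B1' < v N s n B1 := by
  have hmem : ∀ f, InF N B1 f ↔ f ∈ B1.image Prod.fst := by
    intro f
    simp only [InF, Covers, Finset.mem_image]
    constructor
    · rintro ⟨b, hb, h1, h2⟩
      exact ⟨b, hb, le_antisymm h1 (hatomic b hb ▸ h2)⟩
    · rintro ⟨b, hb, rfl⟩
      exact ⟨b, hb, le_rfl, (hatomic b hb).le⟩
  have hdiag : B1 = diagSched N (B1.image Prod.fst) := by
    ext ⟨x, y⟩
    rw [mem_diagSched, Finset.mem_image]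
    constructor
    · intro hb
      exact ⟨⟨_, hb, rfl⟩, hatomic _ hb⟩
    · rintro ⟨⟨⟨a, b⟩, hb, hax⟩, hxy⟩
      obtain rfl : a = b := hatomic _ hb
      obtain rfl : a = x := hax
      obtain rfl : a = y := hxy
      exact hb
  obtain ⟨h₀, hh₀, g₀, hg₀, hlt⟩ := hhole
  rw [hmem] at hh₀ hg₀
  generalize B1.image Prod.fst = S at hdiag hh₀ hg₀
  have hlt' : g₀ < h₀ := by
    rw [lB, lB, leftPos_eq N s hs, leftPos_eq N s hs] at hlt
    exact Fin.lt_def.2 (lt_of_mul_lt_mul_right (by omega : g₀.val * k < h₀.val * k) k.zero_le)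
  obtain ⟨g, h, hg, hh, hgh⟩ := exists_adjacent N S g₀ h₀ hg₀ hh₀ hlt'
  refine ⟨diagSched N (S.map (Equiv.swap g h).toEmbedding),
    fun b hb => ((mem_diagSched N _ b).1 hb).2.le, ?_⟩
  rw [hdiag, v, v, ← Equiv.sum_comp (Equiv.swap g h)]
  simp only [hn, one_mul]
  have hmap : ∀ f, Equiv.swap g h f ∈ S.map (Equiv.swap g h).toEmbedding ↔ f ∈ S :=
    fun f => Finset.mem_map' (Equiv.swap g h).toEmbedding
  have hmemresp : ∀ f ∈ S,
      resp N s (diagSched N (S.map (Equiv.swap g h).toEmbedding)) (Equiv.swap g h f) =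
        (N * k - (Equiv.swap g h f).val * k) + 2 * ((S.filter (fun j => f < j)).card * k) :=
    fun f hf => by
      rw [resp_diag_mem N s hk hs _ _ ((hmap f).2 hf), card_above_swap N S g h f hh hgh hf]
  refine Finset.sum_lt_sum (fun f _ => ?_) ⟨g, Finset.mem_univ g, ?_⟩
  · by_cases hf : f ∈ S
    · rw [hmemresp f hf, resp_diag_mem N s hk hs _ _ hf]
      have hle : f.val ≤ (Equiv.swap g h f).val := by
        have : f.val ≠ h.val := fun e => hh (Fin.ext e ▸ hf)
        rw [swap_val]
        split_ifs <;> omega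
      have := Nat.mul_le_mul_right k hle
      omega
    · rw [resp_diag_not_mem N s hs _ _ (fun h' => hf ((hmap f).1 h')),
        resp_diag_not_mem N s hs _ _ hf, Finset.card_map]
      have hle : (Equiv.swap g h f).val ≤ f.val := by
        have : f.val ≠ g.val := fun e => hf (Fin.ext e ▸ hg)
        rw [swap_val]
        split_ifs <;> omega
      have := Nat.mul_le_mul_right k hle
      omega
  · rw [hmemresp g hg, resp_diag_mem N s hk hs _ _ hg, Equiv.swap_apply_left, hgh, add_mul,
      one_mul]
    -- The truncated subtraction `N * k - g * k` is positive because `g < N`.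
    have := Nat.mul_lt_mul_of_pos_right g.isLt (show 0 < k from hk)
    omega

end LTSP
end
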